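/- Comparison with step-function initial data: let g : ℝ → ℝ be locally Lipschitz continuous, let T > 0, and let u : ℝ × [0,T] → ℝ be a bounded continuous mild solution of ∂_t u + Au = g(u) such that u(·,0) has finite limits at +∞ and −∞. Let N ≥ 1, a₀, a₁, …, a_N ∈ ℝ, c₁ < c₂ < … < c_N, and set v₀(x) = a₀ + Σ_{j=1}^N a_j·H(x − c_j), where H is the Heaviside function; let γ = min_{x∈ℝ} v₀(x) and δ = max_{x∈ℝ} v₀(x). If g(ζ) ≥ 0 for all ζ ∈ [γ,δ] and u(x,0) ≥ v₀(x) for all x ∈ ℝ, then u(x,t) ≥ a₀ + Σ_{j=1}^N a_j·F((x − c_j)/t) for all x ∈ ℝ and t ∈ (0,T]. -/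

import Mathlib

open Real MeasureTheory Filter Topology

/-- The fundamental solution at time `t` of the free equation `∂_t u + Au = 0`,
where `A` is the order-1 pseudodifferential operator with symbol
`λ ↦ e^{−iπ·sign(λ)·β/2}|λ|`, `κ = cos(πβ/2)`, `σ = sin(πβ/2)`. -/
noncomputable def stableKernel (κ σ t x : ℝ) : ℝ :=
  κ * t / (π * ((x - σ * t) ^ 2 + (κ * t) ^ 2))

/-- `u : ℝ × [0,T] → ℝ` is a mild solution of `∂_t u + Au = g(u)`:
`u(x,t) = ∫ p_t(x−y)·u(y,0) dy + ∫₀ᵗ ∫ p_{t−s}(x−y)·g(u(y,s)) dy ds`. -/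
def IsMildSolution (κ σ : ℝ) (g : ℝ → ℝ) (T : ℝ) (u : ℝ → ℝ → ℝ) : Prop :=
  ∀ x t : ℝ, 0 < t → t ≤ T →
    u x t = (∫ y : ℝ, stableKernel κ σ t (x - y) * u y 0) +
      ∫ s in Set.Ioc (0 : ℝ) t,
        ∫ y : ℝ, stableKernel κ σ (t - s) (x - y) * g (u y s)

/-- The Heaviside function. -/
noncomputable def heaviside (x : ℝ) : ℝ := if 0 ≤ x then 1 else 0

/-!
Write `P t` for the free evolution, a Markov semigroup, and `v x t = (P t v₀) x`. Since `P t`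
averages, `v` takes values in `[γ, δ]`, where `g ≥ 0`, so the source in the equation for `w = u - v`
satisfies `g(u) ≥ g(u) - g(v) ≥ -L |w|`. Transporting `w(·, s)` freely to time `t` and
evaluating at `x` gives a scalar function of `s` which is absolutely continuous, with derivative the
average of the source. If `w ≥ -C exp (3 L s)`, then `|w| ≤ w + 2 C exp (3 L s)`, and the resulting
scalar differential inequality improves the bound to `w ≥ -(C / 2) exp (3 L s)`; iterating, `w ≥ 0`.

The semigroup law for the Cauchy kernels is read off from their characteristic functions, and the
free evolution of a Heaviside function is the stable distribution function.
-/

open ProbabilityTheory Function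
open scoped NNReal FourierTransform

lemma le_of_absolutelyContinuousOnInterval_of_ae_hasDerivAt_nonneg {f f' : ℝ → ℝ} {a b : ℝ}
    (hab : a ≤ b) (hf : AbsolutelyContinuousOnInterval f a b)
    (hf' : ∀ᵐ s, s ∈ Set.Ioo a b → HasDerivAt f (f' s) s ∧ 0 ≤ f' s) : f a ≤ f b := by
  rw [← sub_nonneg, ← hf.integral_deriv_eq_sub, intervalIntegral.integral_of_le hab,
    integral_Ioc_eq_integral_Ioo]
  refine setIntegral_nonneg_of_ae_restrict ((ae_restrict_iff' measurableSet_Ioo).2 ?_)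
  filter_upwards [hf'] with s hs hmem
  obtain ⟨hderiv, hnonneg⟩ := hs hmem
  simpa only [Pi.zero_apply, hderiv.deriv] using hnonneg

/-- The weight is chosen so that the forcing term, once multiplied by `exp (l * s)`, integrates to
`C / 2 * exp (4 * l * s)`: this is what halves the constant `C`. -/
lemma neg_half_mul_exp_le_add_integral {G : ℝ → ℝ} {y₀ l C t : ℝ} (ht : 0 ≤ t)
    (hG : IntervalIntegrable G volume 0 t) (hy₀ : 0 ≤ y₀) (hC : 0 ≤ C)
    (hlower : ∀ s ∈ Set.Ioo 0 t,
      -(2 * l * (C * exp (3 * l * s))) ≤ G s + l * (y₀ + ∫ r in 0..s, G r)) :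
    -(C / 2 * exp (3 * l * t)) ≤ y₀ + ∫ r in 0..t, G r := by
  set y : ℝ → ℝ := fun s ↦ y₀ + ∫ r in 0..s, G r with hy
  let Φ : ℝ → ℝ := fun s ↦ exp (l * s) * y s + C / 2 * exp (4 * l * s)
  have hy_ac : AbsolutelyContinuousOnInterval y 0 t :=
    (contDiff_const.contDiffOn.absolutelyContinuousOnInterval).fun_add
      (hG.absolutelyContinuousOnInterval_intervalIntegral Set.left_mem_uIcc)
  have hΦ_ac : AbsolutelyContinuousOnInterval Φ 0 t :=
    ((ContDiff.contDiffOn (by fun_prop)).absolutelyContinuousOnInterval.fun_mul hy_ac).fun_add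
      (ContDiff.contDiffOn (by fun_prop)).absolutelyContinuousOnInterval
  have hΦ_mono : Φ 0 ≤ Φ t := by
    refine le_of_absolutelyContinuousOnInterval_of_ae_hasDerivAt_nonneg ht hΦ_ac
      (f' := fun s ↦ exp (l * s) * (G s + l * y s + 2 * l * (C * exp (3 * l * s)))) ?_
    filter_upwards [hG.ae_hasDerivAt_integral] with s hs hmem
    have hy_deriv : HasDerivAt y (G s) s :=
      (hs (Set.Ioo_subset_Icc_self.trans Set.Icc_subset_uIcc hmem) 0 Set.left_mem_uIcc).const_add y₀
    have hexp (c : ℝ) : HasDerivAt (fun s ↦ exp (c * s)) (exp (c * s) * c) s := by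
      simpa using ((hasDerivAt_id s).const_mul c).exp
    refine ⟨(((hexp l).mul hy_deriv).add ((hexp (4 * l)).const_mul (C / 2))).congr_deriv ?_,
      mul_nonneg (exp_pos _).le (by linarith [hlower s hmem])⟩
    rw [show 4 * l * s = l * s + 3 * l * s by ring, exp_add]
    ring
  have hΦ_zero : Φ 0 = y₀ + C / 2 := by simp [Φ, hy]
  have hΦ_nonneg : 0 ≤ Φ t := (by positivity : 0 ≤ y₀ + C / 2).trans (hΦ_zero ▸ hΦ_mono)
  have hΦ_eq : Φ t = exp (l * t) * (y t + C / 2 * exp (3 * l * t)) := by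
    simp only [Φ]
    rw [show 4 * l * t = l * t + 3 * l * t by ring, exp_add]
    ring
  have := nonneg_of_mul_nonneg_right (hΦ_eq ▸ hΦ_nonneg) (exp_pos _)
  linarith

/-- A transition semigroup on `X`: `P t x` is the law at time `t` of the process started at `x`.
Nothing beyond measurability is required at negative times. -/
structure IsTransitionSemigroup {X : Type*} [MeasurableSpace X] (P : ℝ → Kernel X X) : Prop where
  measurable_uncurry : Measurable fun p : ℝ × X ↦ P p.1 p.2
  zero : P 0 = Kernel.id
  comp : ∀ ⦃s t : ℝ⦄, 0 ≤ s → 0 ≤ t → P t ∘ₖ P s = P (s + t)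

/-- Mild solutions on `[0, T]` of the linear equation `∂ₜw = 𝓛w + h`, where `𝓛` generates the
transition semigroup `P`: the variation-of-constants formula holds with initial datum `w(·, 0)`. -/
def IsDuhamelSolution {X : Type*} [MeasurableSpace X] (P : ℝ → Kernel X X) (T : ℝ)
    (h w : X → ℝ → ℝ) : Prop :=
  ∀ x, ∀ t ∈ Set.Ioc 0 T,
    w x t = ∫ y, w y 0 ∂P t x + ∫ r in 0..t, ∫ y, h y r ∂P (t - r) x

section BoundedFunction

variable {X : Type*} [MeasurableSpace X] {μ : Measure X} {f : X → ℝ} {B : ℝ}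

lemma integrable_of_forall_abs_le [IsFiniteMeasure μ] (hf : Measurable f) (hB : ∀ x, |f x| ≤ B) :
    Integrable f μ :=
  .of_bound hf.aestronglyMeasurable B (ae_of_all _ hB)

lemma abs_integral_le_of_forall_abs_le [IsProbabilityMeasure μ] (hB : ∀ x, |f x| ≤ B) :
    |∫ x, f x ∂μ| ≤ B := by
  simpa using norm_integral_le_of_norm_le_const (μ := μ) (f := f) (C := B) (ae_of_all _ hB)

end BoundedFunction

section TransitionSemigroup

variable {X : Type*} [MeasurableSpace X] {P : ℝ → Kernel X X}

namespace IsTransitionSemigroup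

lemma integral_integral (hP : IsTransitionSemigroup P) {s t : ℝ} (hs : 0 ≤ s) (ht : 0 ≤ t)
    {f : X → ℝ} {x : X} (hf : Integrable f (P (s + t) x)) :
    ∫ y, ∫ z, f z ∂P t y ∂P s x = ∫ z, f z ∂P (s + t) x := by
  rw [← hP.comp hs ht] at hf ⊢
  exact (Kernel.integral_comp hf).symm

lemma integral_zero (hP : IsTransitionSemigroup P) {f : X → ℝ} (hf : Measurable f) (x : X) :
    ∫ y, f y ∂P 0 x = f x := by
  rw [hP.zero, Kernel.id_apply, integral_dirac' _ _ hf.stronglyMeasurable]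

end IsTransitionSemigroup

variable {T : ℝ} {h w : X → ℝ → ℝ}

lemma IsDuhamelSolution.sub_integral (hw : IsDuhamelSolution P T h w)
    (hP : IsTransitionSemigroup P) (hw₀ : ∀ t x, Integrable (w · 0) (P t x)) {v₀ : X → ℝ}
    (hv₀ : Measurable v₀) (hv₀_int : ∀ t x, Integrable v₀ (P t x)) :
    IsDuhamelSolution P T h fun x t ↦ w x t - ∫ y, v₀ y ∂P t x := by
  intro x t ht
  simp only [hP.integral_zero hv₀]
  rw [hw x t ht, integral_sub (hw₀ t x) (hv₀_int t x)]
  ring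

variable [∀ t, IsMarkovKernel (P t)]

namespace IsTransitionSemigroup

lemma measurable_integral (hP : IsTransitionSemigroup P) {h : X → ℝ → ℝ}
    (hh : Measurable (uncurry h)) :
    Measurable fun q : ℝ × ℝ × X ↦ ∫ y, h y q.2.1 ∂P q.1 q.2.2 := by
  let κ : Kernel (ℝ × ℝ × X) X :=
    ⟨fun q ↦ P q.1 q.2.2, hP.measurable_uncurry.comp (by fun_prop : Measurable
      fun q : ℝ × ℝ × X ↦ (q.1, q.2.2))⟩
  have : IsMarkovKernel κ := ⟨fun q ↦ (inferInstance : IsProbabilityMeasure (P q.1 q.2.2))⟩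
  refine (StronglyMeasurable.integral_kernel_prod_right (κ := κ)
    (f := fun q y ↦ h y q.2.1) (Measurable.stronglyMeasurable ?_)).measurable
  exact hh.comp (by fun_prop : Measurable fun p : (ℝ × ℝ × X) × X ↦ (p.2, p.1.2.1))

lemma measurable_uncurry_integral (hP : IsTransitionSemigroup P) {f : X → ℝ} (hf : Measurable f) :
    Measurable (uncurry fun x t ↦ ∫ y, f y ∂P t x) :=
  (hP.measurable_integral (h := fun y _ ↦ f y) (by fun_prop)).comp
    (by fun_prop : Measurable fun p : X × ℝ ↦ (p.2, (0 : ℝ), p.1))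

end IsTransitionSemigroup

/-- Transporting `w(·, s)` freely to time `t` amounts to switching the source off at time `s`. -/
lemma IsDuhamelSolution.integral_eq_add_intervalIntegral (hw : IsDuhamelSolution P T h w)
    (hP : IsTransitionSemigroup P) (hh : Measurable (uncurry h)) {B : ℝ} (hB : ∀ y r, |h y r| ≤ B)
    (hw₀ : Measurable (w · 0)) {W : ℝ} (hW : ∀ y, |w y 0| ≤ W)
    {s t : ℝ} (hs : s ∈ Set.Ioc 0 T) (hst : s ≤ t) (x : X) :
    ∫ y, w y s ∂P (t - s) x =
      ∫ y, w y 0 ∂P t x + ∫ r in 0..s, ∫ y, h y r ∂P (t - r) x := by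
  have hts : 0 ≤ t - s := sub_nonneg.2 hst
  have hdatum : Integrable (fun y ↦ ∫ z, w z 0 ∂P s y) (P (t - s) x) :=
    integrable_of_forall_abs_le (hP.measurable_uncurry_integral hw₀).of_uncurry_right
      fun _ ↦ abs_integral_le_of_forall_abs_le hW
  have hsource : Integrable (uncurry fun y r ↦ ∫ z, h z r ∂P (s - r) y)
      ((P (t - s) x).prod (volume.restrict (Set.Ioc 0 s))) :=
    .of_bound ((hP.measurable_integral hh).comp
      (by fun_prop : Measurable fun p : X × ℝ ↦ (s - p.2, p.2, p.1))).aestronglyMeasurable B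
      (ae_of_all _ fun p ↦ abs_integral_le_of_forall_abs_le (hB · p.2))
  have hsource_int : Integrable (fun y ↦ ∫ r in Set.Ioc 0 s, ∫ z, h z r ∂P (s - r) y)
      (P (t - s) x) := hsource.integral_prod_left
  simp_rw [hw _ s hs, intervalIntegral.integral_of_le hs.1.le]
  rw [integral_add hdatum hsource_int, integral_integral_swap hsource,
    hP.integral_integral hts hs.1.le (integrable_of_forall_abs_le hw₀ hW), sub_add_cancel]
  congr 1
  refine setIntegral_congr_fun measurableSet_Ioc fun r hr ↦ ?_
  rw [hP.integral_integral hts (sub_nonneg.2 hr.2)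
    (integrable_of_forall_abs_le hh.of_uncurry_right (hB · r)), sub_add_sub_cancel]

/-- Adding the damping term `L * w` to `h ≥ -L |w|` leaves twice the negative part of `w`, so that
only a lower bound on `w` enters. -/
lemma IsDuhamelSolution.neg_half_mul_exp_le (hw : IsDuhamelSolution P T h w)
    (hP : IsTransitionSemigroup P) (hh : Measurable (uncurry h)) {B : ℝ} (hB : ∀ y r, |h y r| ≤ B)
    (hw_meas : Measurable (uncurry w)) {W : ℝ} (hW : ∀ y r, |w y r| ≤ W) (hw₀ : ∀ y, 0 ≤ w y 0)
    {L : ℝ} (hL : 0 ≤ L) (hlower : ∀ y, ∀ r ∈ Set.Ioc 0 T, -(L * |w y r|) ≤ h y r)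
    {C : ℝ} (hC : 0 ≤ C) (hwC : ∀ y, ∀ r ∈ Set.Ioc 0 T, -(C * exp (3 * L * r)) ≤ w y r)
    (x : X) {t : ℝ} (ht : t ∈ Set.Ioc 0 T) : -(C / 2 * exp (3 * L * t)) ≤ w x t := by
  have hsource : IntervalIntegrable (fun r ↦ ∫ y, h y r ∂P (t - r) x) volume 0 t :=
    (intervalIntegrable_const (c := B)).mono_fun'
      ((hP.measurable_integral hh).comp
        (by fun_prop : Measurable fun r : ℝ ↦ (t - r, r, x))).aestronglyMeasurable
      (ae_of_all _ fun r ↦ abs_integral_le_of_forall_abs_le (hB · r))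
  rw [hw x t ht]
  refine neg_half_mul_exp_le_add_integral ht.1.le hsource
    (integral_nonneg hw₀) hC fun s hs ↦ ?_
  have hsT : s ∈ Set.Ioc 0 T := ⟨hs.1, hs.2.le.trans ht.2⟩
  have hh_int : Integrable (h · s) (P (t - s) x) :=
    integrable_of_forall_abs_le hh.of_uncurry_right (hB · s)
  have hw_int : Integrable (fun y ↦ L * w y s) (P (t - s) x) :=
    (integrable_of_forall_abs_le hw_meas.of_uncurry_right (hW · s)).const_mul L
  rw [← hw.integral_eq_add_intervalIntegral hP hh hB hw_meas.of_uncurry_right (hW · 0) hsT hs.2.le,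
    ← integral_const_mul, ← integral_add hh_int hw_int]
  refine (convex_Ici _).integral_mem isClosed_Ici (ae_of_all _ fun y ↦ ?_) (hh_int.add hw_int)
  rw [Set.mem_Ici, Pi.add_apply]
  have habs : |w y s| ≤ w y s + 2 * (C * exp (3 * L * s)) :=
    abs_le.2 ⟨by linarith [hwC y s hsT], by linarith [mul_nonneg hC (exp_pos (3 * L * s)).le]⟩
  linarith [hlower y s hsT, mul_le_mul_of_nonneg_left habs hL]

theorem IsDuhamelSolution.nonneg (hw : IsDuhamelSolution P T h w)
    (hP : IsTransitionSemigroup P) (hh : Measurable (uncurry h)) {B : ℝ} (hB : ∀ y r, |h y r| ≤ B)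
    (hw_meas : Measurable (uncurry w)) {W : ℝ} (hW : ∀ y r, |w y r| ≤ W) (hw₀ : ∀ y, 0 ≤ w y 0)
    {L : ℝ} (hL : 0 ≤ L) (hlower : ∀ y, ∀ r ∈ Set.Ioc 0 T, -(L * |w y r|) ≤ h y r)
    (x : X) {t : ℝ} (ht : t ∈ Set.Ioc 0 T) : 0 ≤ w x t := by
  have hW_nonneg : 0 ≤ W := (abs_nonneg _).trans (hW x t)
  have hbound (n : ℕ) : ∀ y, ∀ r ∈ Set.Ioc 0 T, -(W / 2 ^ n * exp (3 * L * r)) ≤ w y r := by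
    induction n with
    | zero =>
      intro y r hr
      have hexp : 1 ≤ exp (3 * L * r) := one_le_exp (by have := hr.1; positivity)
      linarith [neg_le_of_abs_le (hW y r), le_mul_of_one_le_right hW_nonneg hexp]
    | succ n ih =>
      intro y r hr
      rw [pow_succ, ← div_div]
      exact hw.neg_half_mul_exp_le hP hh hB hw_meas hW hw₀ hL hlower (by positivity) ih y hr
  have hlim : Tendsto (fun n : ℕ ↦ -(W / 2 ^ n * exp (3 * L * t))) atTop (𝓝 0) := by
    have hpow : Tendsto (fun n : ℕ ↦ W / 2 ^ n) atTop (𝓝 0) :=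
      tendsto_const_nhds.div_atTop (tendsto_pow_atTop_atTop_of_one_lt one_lt_two)
    simpa using (hpow.mul_const (exp (3 * L * t))).neg
  exact le_of_tendsto' hlim fun n ↦ hbound n x t ht

theorem IsDuhamelSolution.integral_le {g : ℝ → ℝ} {u : X → ℝ → ℝ}
    (hu : IsDuhamelSolution P T (fun y r ↦ g (u y r)) u)
    (hP : IsTransitionSemigroup P) (hg : LocallyLipschitz g)
    (hu_meas : Measurable (uncurry u)) {M : ℝ} (hM : ∀ y r, |u y r| ≤ M)
    {v₀ : X → ℝ} (hv₀ : Measurable v₀) {γ δ : ℝ} (hv₀_mem : ∀ y, v₀ y ∈ Set.Icc γ δ)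
    (hg_nonneg : ∀ ζ ∈ Set.Icc γ δ, 0 ≤ g ζ) (h0 : ∀ y, v₀ y ≤ u y 0)
    (x : X) {t : ℝ} (ht : t ∈ Set.Ioc 0 T) : ∫ y, v₀ y ∂P t x ≤ u x t := by
  obtain ⟨R, hu_mem, hγδ⟩ : ∃ R, (∀ y r, u y r ∈ Set.Icc (-R) R) ∧
      Set.Icc γ δ ⊆ Set.Icc (-R) R :=
    ⟨max M (max |γ| |δ|), fun y r ↦ abs_le.1 ((hM y r).trans (le_max_left _ _)),
      Set.Icc_subset_Icc (neg_le_of_abs_le (by simp)) (le_of_abs_le (by simp))⟩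
  obtain ⟨K, hK⟩ := hg.locallyLipschitzOn.exists_lipschitzOnWith_of_compact
    (isCompact_Icc (a := -R) (b := R))
  obtain ⟨B, hB⟩ := isCompact_Icc.exists_bound_of_continuousOn
    (hg.continuous.continuousOn (s := Set.Icc (-R) R))
  let v : X → ℝ → ℝ := fun y s ↦ ∫ z, v₀ z ∂P s y
  have hv₀_int (s : ℝ) (y : X) : Integrable v₀ (P s y) :=
    integrable_of_forall_abs_le hv₀ fun z ↦ abs_le.2 (hγδ (hv₀_mem z))
  have hv_mem (y : X) (s : ℝ) : v y s ∈ Set.Icc γ δ :=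
    (convex_Icc γ δ).integral_mem isClosed_Icc (ae_of_all _ hv₀_mem) (hv₀_int s y)
  have hlower (y : X) (s : ℝ) : -(K * |u y s - v y s|) ≤ g (u y s) := by
    have hlip := hK.dist_le_mul _ (hu_mem y s) _ (hγδ (hv_mem y s))
    rw [dist_eq, dist_eq] at hlip
    linarith [neg_le_of_abs_le hlip, hg_nonneg _ (hv_mem y s)]
  have hdiff : IsDuhamelSolution P T (fun y r ↦ g (u y r)) fun y s ↦ u y s - v y s :=
    hu.sub_integral hP
      (fun _ _ ↦ integrable_of_forall_abs_le hu_meas.of_uncurry_right (hM · 0)) hv₀ hv₀_int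
  refine sub_nonneg.1 (hdiff.nonneg hP (hg.continuous.measurable.comp hu_meas)
    (fun y r ↦ hB _ (hu_mem y r)) (hu_meas.sub (hP.measurable_uncurry_integral hv₀))
    (fun y r ↦ (abs_sub _ _).trans (add_le_add (abs_le.2 (hu_mem y r))
      (abs_le.2 (hγδ (hv_mem y r)))))
    (fun y ↦ ?_) K.coe_nonneg (fun y r _ ↦ hlower y r) x ht)
  simpa only [v, hP.integral_zero hv₀, sub_nonneg] using h0 y

end TransitionSemigroup

section TwoSidedExponential

variable {γ : ℝ}

lemma cexp_mul_I_sub_mul_abs_of_nonpos (γ c : ℝ) {v : ℝ} (hv : v ≤ 0) :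
    Complex.exp (c * v * Complex.I - γ * |v|) = Complex.exp ((γ + c * Complex.I) * v) := by
  rw [abs_of_nonpos hv]
  push_cast
  ring_nf

lemma cexp_mul_I_sub_mul_abs_of_nonneg (γ c : ℝ) {v : ℝ} (hv : 0 ≤ v) :
    Complex.exp (c * v * Complex.I - γ * |v|) = Complex.exp ((-γ + c * Complex.I) * v) := by
  rw [abs_of_nonneg hv]
  ring_nf

lemma integrableOn_Iic_cexp_mul_I_sub_mul_abs (hγ : 0 < γ) (c : ℝ) :
    IntegrableOn (fun v : ℝ ↦ Complex.exp (c * v * Complex.I - γ * |v|)) (Set.Iic 0) :=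
  (integrableOn_exp_mul_complex_Iic (by simpa) 0).congr_fun
    (fun _ hv ↦ (cexp_mul_I_sub_mul_abs_of_nonpos γ c hv).symm) measurableSet_Iic

lemma integrableOn_Ioi_cexp_mul_I_sub_mul_abs (hγ : 0 < γ) (c : ℝ) :
    IntegrableOn (fun v : ℝ ↦ Complex.exp (c * v * Complex.I - γ * |v|)) (Set.Ioi 0) :=
  (integrableOn_exp_mul_complex_Ioi (by simpa) 0).congr_fun
    (fun _ hv ↦ (cexp_mul_I_sub_mul_abs_of_nonneg γ c (le_of_lt hv)).symm) measurableSet_Ioi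

lemma integrable_cexp_mul_I_sub_mul_abs (hγ : 0 < γ) (c : ℝ) :
    Integrable fun v : ℝ ↦ Complex.exp (c * v * Complex.I - γ * |v|) := by
  simpa only [Set.Iic_union_Ioi, integrableOn_univ] using
    (integrableOn_Iic_cexp_mul_I_sub_mul_abs hγ c).union
      (integrableOn_Ioi_cexp_mul_I_sub_mul_abs hγ c)

lemma integral_cexp_mul_I_sub_mul_abs (hγ : 0 < γ) (c : ℝ) :
    ∫ v : ℝ, Complex.exp (c * v * Complex.I - γ * |v|) = 2 * γ / (c ^ 2 + γ ^ 2) := by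
  have hre_neg : 0 < (γ + c * Complex.I : ℂ).re := by simpa
  have hre_pos : (-γ + c * Complex.I : ℂ).re < 0 := by simpa
  have hne_neg : (γ + c * Complex.I : ℂ) ≠ 0 := fun h ↦ hre_neg.ne' (by simp [h])
  have hne_pos : (-γ + c * Complex.I : ℂ) ≠ 0 := fun h ↦ hre_pos.ne (by simp [h])
  have hfactor : (c ^ 2 + γ ^ 2 : ℂ) = -((γ + c * Complex.I) * (-γ + c * Complex.I)) := by
    linear_combination (c ^ 2 : ℂ) * Complex.I_sq
  rw [← intervalIntegral.integral_Iic_add_Ioi (integrableOn_Iic_cexp_mul_I_sub_mul_abs hγ c)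
      (integrableOn_Ioi_cexp_mul_I_sub_mul_abs hγ c),
    setIntegral_congr_fun measurableSet_Iic fun _ hv ↦ cexp_mul_I_sub_mul_abs_of_nonpos γ c hv,
    setIntegral_congr_fun measurableSet_Ioi fun _ hv ↦
      cexp_mul_I_sub_mul_abs_of_nonneg γ c (le_of_lt hv),
    integral_exp_mul_complex_Iic hre_neg, integral_exp_mul_complex_Ioi hre_pos, hfactor]
  simp only [Complex.ofReal_zero, mul_zero, Complex.exp_zero]
  field_simp
  ring

end TwoSidedExponential

section Cauchy

variable (x₀ : ℝ) {γ : ℝ≥0}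

lemma fourier_cexp_mul_I_sub_mul_abs (hγ : γ ≠ 0) :
    𝓕 (fun v : ℝ ↦ Complex.exp ((2 * π * x₀ : ℝ) * v * Complex.I - (2 * π * γ : ℝ) * |v|)) =
      fun w ↦ (cauchyPDFReal x₀ γ w : ℂ) := by
  ext w
  rw [Real.fourier_real_eq_integral_exp_smul]
  calc ∫ v : ℝ, Complex.exp (↑(-2 * π * v * w) * Complex.I) •
        Complex.exp ((2 * π * x₀ : ℝ) * v * Complex.I - (2 * π * γ : ℝ) * |v|)
      = ∫ v : ℝ, Complex.exp ((2 * π * (x₀ - w) : ℝ) * v * Complex.I - (2 * π * γ : ℝ) * |v|) := by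
        refine integral_congr_ae (ae_of_all _ fun v ↦ ?_)
        simp only [smul_eq_mul, ← Complex.exp_add]
        congr 1
        push_cast
        ring
    _ = (2 * (2 * π * γ) / ((2 * π * (x₀ - w)) ^ 2 + (2 * π * γ) ^ 2) : ℝ) := by
        rw [integral_cexp_mul_I_sub_mul_abs (by positivity)]
        push_cast
        rfl
    _ = (cauchyPDFReal x₀ γ w : ℂ) := by
        rw [cauchyPDFReal_def, Complex.ofReal_inj]
        rw [← neg_sub x₀ w, neg_sq]
        have hdenom : (x₀ - w) ^ 2 + (γ : ℝ) ^ 2 ≠ 0 := by positivity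
        field_simp

lemma integral_cauchyMeasure {E : Type*} [NormedAddCommGroup E] [NormedSpace ℝ E] (hγ : γ ≠ 0)
    (f : ℝ → E) : ∫ y, f y ∂cauchyMeasure x₀ γ = ∫ y, cauchyPDFReal x₀ γ y • f y := by
  rw [cauchyMeasure_of_scale_ne_zero _ hγ, integral_withDensity_eq_integral_toReal_smul
    (measurable_cauchyPDF x₀ γ) (ae_of_all _ fun y ↦ by simp [cauchyPDF])]
  simp only [cauchyPDF, ENNReal.toReal_ofReal (cauchyPDF_pos x₀ hγ _).le]

variable (γ) in
theorem charFun_cauchyMeasure (ξ : ℝ) :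
    charFun (cauchyMeasure x₀ γ) ξ = Complex.exp (x₀ * ξ * Complex.I - γ * |ξ|) := by
  obtain rfl | hγ := eq_or_ne γ 0
  · simp [mul_comm]
  let f : ℝ → ℂ := fun v ↦ Complex.exp ((2 * π * x₀ : ℝ) * v * Complex.I - (2 * π * γ : ℝ) * |v|)
  have hf_cont : Continuous f := by fun_prop
  have hf_fourier : 𝓕 f = fun w ↦ (cauchyPDFReal x₀ γ w : ℂ) := fourier_cexp_mul_I_sub_mul_abs x₀ hγ
  have hf_int : Integrable f := integrable_cexp_mul_I_sub_mul_abs (by positivity) _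
  have hinversion : 𝓕⁻ (𝓕 f) = f := hf_cont.fourierInv_fourier_eq hf_int
    (hf_fourier ▸ (integrable_cauchyPDFReal x₀).ofReal)
  calc charFun (cauchyMeasure x₀ γ) ξ
      = 𝓕⁻ (𝓕 f) (ξ / (2 * π)) := by
        rw [charFun_apply_real, integral_cauchyMeasure x₀ hγ, hf_fourier,
          Real.fourierInv_eq_fourier_neg, Real.fourier_real_eq_integral_exp_smul]
        refine integral_congr_ae (ae_of_all _ fun v ↦ ?_)
        have hphase : -2 * π * v * -(ξ / (2 * π)) = ξ * v := by field_simp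
        simp only [hphase, Complex.real_smul, smul_eq_mul]
        rw [Complex.ofReal_mul, mul_comm]
    _ = f (ξ / (2 * π)) := by rw [hinversion]
    _ = Complex.exp (x₀ * ξ * Complex.I - γ * |ξ|) := by
        have hπ : (π : ℂ) ≠ 0 := by exact_mod_cast pi_ne_zero
        simp only [f, abs_div, abs_of_pos two_pi_pos]
        congr 1
        push_cast
        field_simp

variable (γ) in
lemma map_cauchyMeasure_zero_one :
    (cauchyMeasure 0 1).map (fun z ↦ γ * z + x₀) = cauchyMeasure x₀ γ := by
  have : IsProbabilityMeasure ((cauchyMeasure 0 1).map fun z ↦ γ * z + x₀) :=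
    Measure.isProbabilityMeasure_map (by fun_prop)
  refine Measure.ext_of_charFun (funext fun ξ ↦ ?_)
  have hcomp : (cauchyMeasure 0 1).map (fun z ↦ γ * z + x₀) =
      ((cauchyMeasure 0 1).map (fun z ↦ (γ : ℝ) * z)).map (· + x₀) := by
    rw [Measure.map_map (by fun_prop) (by fun_prop)]
    rfl
  rw [hcomp, charFun_map_add_const, charFun_map_mul, charFun_cauchyMeasure, charFun_cauchyMeasure,
    ← Complex.exp_add]
  congr 1
  simp only [Complex.ofReal_zero, Complex.ofReal_mul, zero_mul, NNReal.coe_one, Complex.ofReal_one,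
    abs_mul, NNReal.abs_eq, one_mul, zero_sub, RCLike.inner_apply, ringHom_apply]
  ring

lemma measurable_cauchyMeasure : Measurable fun p : ℝ × ℝ≥0 ↦ cauchyMeasure p.1 p.2 := by
  refine Measure.measurable_of_measurable_coe _ fun s hs ↦ ?_
  have hpre : MeasurableSet {q : (ℝ × ℝ≥0) × ℝ | q.1.2 * q.2 + q.1.1 ∈ s} :=
    (by fun_prop : Measurable fun q : (ℝ × ℝ≥0) × ℝ ↦ q.1.2 * q.2 + q.1.1) hs
  convert measurable_measure_prodMk_left (ν := cauchyMeasure 0 1) hpre using 2 with p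
  rw [← map_cauchyMeasure_zero_one p.1 p.2, Measure.map_apply (by fun_prop) hs]
  rfl

lemma cauchyMeasure_real_Ici (hγ : γ ≠ 0) (c : ℝ) :
    (cauchyMeasure x₀ γ).real (Set.Ici c) = 1 / 2 + 1 / π * arctan ((x₀ - c) / γ) := by
  have hγ_pos : (0 : ℝ) < γ := by positivity
  have hpre : (fun z : ℝ ↦ γ * z + x₀) ⁻¹' Set.Ici c = Set.Ici ((c - x₀) / γ) := by
    ext z
    simp [div_le_iff₀' hγ_pos]
  have hind (a z : ℝ) : cauchyPDFReal 0 1 z • (Set.Ici a).indicator (1 : ℝ → ℝ) z =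
      (Set.Ici a).indicator (fun z ↦ π⁻¹ * (1 + z ^ 2)⁻¹) z := by
    simp [cauchyPDFReal_def, add_comm, Set.indicator_apply]
  rw [← map_cauchyMeasure_zero_one, map_measureReal_apply (by fun_prop) measurableSet_Ici, hpre,
    ← integral_indicator_one measurableSet_Ici, integral_cauchyMeasure 0 one_ne_zero]
  simp_rw [hind]
  rw [integral_indicator measurableSet_Ici, integral_Ici_eq_integral_Ioi, integral_const_mul,
    integral_Ioi_inv_one_add_sq, ← neg_sub x₀ c, neg_div, arctan_neg]
  field_simp
  ring

lemma integral_heaviside_sub_cauchyMeasure (hγ : γ ≠ 0) (c : ℝ) :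
    ∫ y, heaviside (y - c) ∂cauchyMeasure x₀ γ = 1 / 2 + 1 / π * arctan ((x₀ - c) / γ) := by
  have hind : (fun y ↦ heaviside (y - c)) = (Set.Ici c).indicator 1 := by
    ext y
    simp [heaviside, Set.indicator_apply]
  rw [hind, integral_indicator_one measurableSet_Ici, cauchyMeasure_real_Ici x₀ hγ]

end Cauchy

section Heaviside

lemma measurable_heaviside : Measurable heaviside :=
  Measurable.ite measurableSet_Ici measurable_const measurable_const

lemma abs_heaviside_le_one (x : ℝ) : |heaviside x| ≤ 1 := by
  rw [heaviside]
  split_ifs <;> simp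

end Heaviside

section StableTransition

/-- The transition kernels of the free equation `∂ₜu + Au = 0`: the law at time `t` of the process
started at `x`. Its density at `y` is `stableKernel κ σ t (x - y)`, so the process drifts by `-σ t`;
Mathlib's convention that `cauchyMeasure` of scale `0` is a Dirac mass gives the identity at
`t = 0`. -/
noncomputable def stableTransition (κ σ t : ℝ) : Kernel ℝ ℝ where
  toFun x := cauchyMeasure (x - σ * t) (κ * t).toNNReal
  measurable' := measurable_cauchyMeasure.comp
    (by fun_prop : Measurable fun x ↦ (x - σ * t, (κ * t).toNNReal))

lemma stableTransition_apply (κ σ t x : ℝ) :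
    stableTransition κ σ t x = cauchyMeasure (x - σ * t) (κ * t).toNNReal := rfl

instance isMarkovKernel_stableTransition (κ σ t : ℝ) : IsMarkovKernel (stableTransition κ σ t) :=
  ⟨fun x ↦ by rw [stableTransition_apply]; infer_instance⟩

variable {κ : ℝ} (σ : ℝ)

lemma charFun_stableTransition (hκ : 0 ≤ κ) {t : ℝ} (ht : 0 ≤ t) (x ξ : ℝ) :
    charFun (stableTransition κ σ t x) ξ =
      Complex.exp (x * ξ * Complex.I) *
        Complex.exp (-(σ * t * ξ * Complex.I) - κ * t * |ξ|) := by
  rw [stableTransition_apply, charFun_cauchyMeasure, Real.coe_toNNReal _ (mul_nonneg hκ ht),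
    ← Complex.exp_add]
  push_cast
  ring_nf

lemma stableTransition_comp (hκ : 0 ≤ κ) {s t : ℝ} (hs : 0 ≤ s) (ht : 0 ≤ t) :
    stableTransition κ σ t ∘ₖ stableTransition κ σ s = stableTransition κ σ (s + t) := by
  refine Kernel.ext fun x ↦ Measure.ext_of_charFun (funext fun ξ ↦ ?_)
  have hint : Integrable (fun z : ℝ ↦ Complex.exp (ξ * z * Complex.I))
      ((stableTransition κ σ t ∘ₖ stableTransition κ σ s) x) :=
    .of_bound (by fun_prop) 1 (ae_of_all _ fun z ↦ by
      rw [← Complex.ofReal_mul, Complex.norm_exp_ofReal_mul_I])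
  rw [charFun_apply_real, Kernel.integral_comp hint]
  simp_rw [← charFun_apply_real, charFun_stableTransition σ hκ ht, integral_mul_const,
    mul_comm _ (ξ : ℂ), ← charFun_apply_real]
  rw [charFun_stableTransition σ hκ hs, charFun_stableTransition σ hκ (add_nonneg hs ht), mul_assoc,
    ← Complex.exp_add]
  push_cast
  ring_nf

theorem isTransitionSemigroup_stableTransition (hκ : 0 ≤ κ) :
    IsTransitionSemigroup (stableTransition κ σ) where
  measurable_uncurry := measurable_cauchyMeasure.comp
    (by fun_prop : Measurable fun p : ℝ × ℝ ↦ (p.2 - σ * p.1, (κ * p.1).toNNReal))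
  zero := Kernel.ext fun x ↦ by simp [stableTransition_apply, Kernel.id_apply]
  comp _ _ hs ht := stableTransition_comp σ hκ hs ht

lemma integral_stableTransition (hκ : 0 < κ) {t : ℝ} (ht : 0 < t) (x : ℝ) (f : ℝ → ℝ) :
    ∫ y, f y ∂stableTransition κ σ t x = ∫ y, stableKernel κ σ t (x - y) * f y := by
  have hκt : 0 < κ * t := mul_pos hκ ht
  rw [stableTransition_apply, integral_cauchyMeasure _ (Real.toNNReal_pos.2 hκt).ne']
  refine integral_congr_ae (ae_of_all _ fun y ↦ ?_)
  simp only [smul_eq_mul, cauchyPDFReal_def, stableKernel, Real.coe_toNNReal _ hκt.le]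
  rw [div_eq_mul_inv, mul_inv]
  ring_nf

lemma integral_heaviside_sub_stableTransition (hκ : 0 < κ) {t : ℝ} (ht : 0 < t) (x c : ℝ) :
    ∫ y, heaviside (y - c) ∂stableTransition κ σ t x =
      1 / 2 + 1 / π * arctan (((x - c) / t - σ) / κ) := by
  have hκt : 0 < κ * t := mul_pos hκ ht
  rw [stableTransition_apply,
    integral_heaviside_sub_cauchyMeasure _ (Real.toNNReal_pos.2 hκt).ne',
    Real.coe_toNNReal _ hκt.le]
  congr 3
  field_simp
  ring

lemma integral_step_stableTransition {ι : Type*} [Fintype ι] (hκ : 0 < κ) {t : ℝ} (ht : 0 < t)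
    (x a₀ : ℝ) (a c : ι → ℝ) :
    ∫ y, (a₀ + ∑ j, a j * heaviside (y - c j)) ∂stableTransition κ σ t x =
      a₀ + ∑ j, a j * (1 / 2 + 1 / π * arctan (((x - c j) / t - σ) / κ)) := by
  have hint (j : ι) : Integrable (fun y ↦ a j * heaviside (y - c j)) (stableTransition κ σ t x) :=
    (integrable_of_forall_abs_le (measurable_heaviside.comp (by fun_prop))
      fun _ ↦ abs_heaviside_le_one _).const_mul _
  rw [integral_add (integrable_const _) (integrable_finsetSum _ fun j _ ↦ hint j),
    integral_finsetSum _ fun j _ ↦ hint j]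
  simp [integral_const_mul, integral_heaviside_sub_stableTransition σ hκ ht]

end StableTransition

section MildSolution

variable {κ σ T : ℝ} {g : ℝ → ℝ} {u v : ℝ → ℝ → ℝ}

lemma IsMildSolution.congr (hu : IsMildSolution κ σ g T u)
    (huv : ∀ x, ∀ t ∈ Set.Icc 0 T, u x t = v x t) : IsMildSolution κ σ g T v := by
  intro x t ht htT
  have hzero (y : ℝ) : v y 0 = u y 0 := (huv y 0 ⟨le_rfl, ht.le.trans htT⟩).symm
  simp_rw [← huv x t ⟨ht.le, htT⟩, hzero, hu x t ht htT]
  congr 1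
  refine setIntegral_congr_fun measurableSet_Ioc fun s hs ↦ ?_
  simp only [huv _ s ⟨hs.1.le, hs.2.trans htT⟩]

lemma IsMildSolution.isDuhamelSolution (hu : IsMildSolution κ σ g T u) (hκ : 0 < κ) :
    IsDuhamelSolution (stableTransition κ σ) T (fun y r ↦ g (u y r)) u := by
  intro x t ht
  rw [hu x t ht.1 ht.2, integral_stableTransition σ hκ ht.1,
    intervalIntegral.integral_of_le ht.1.le]
  congr 1
  -- At `s = t` the function `stableKernel` is identically `0`, not the density of a Dirac mass.
  rw [integral_Ioc_eq_integral_Ioo, integral_Ioc_eq_integral_Ioo]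
  exact setIntegral_congr_fun measurableSet_Ioo fun s hs ↦
    (integral_stableTransition σ hκ (sub_pos.2 hs.2) x _).symm

theorem IsMildSolution.integral_stableTransition_le (hu : IsMildSolution κ σ g T u) (hκ : 0 < κ)
    (hg : LocallyLipschitz g)
    (hu_cont : ContinuousOn (fun p : ℝ × ℝ ↦ u p.1 p.2) (Set.univ ×ˢ Set.Icc 0 T))
    (hu_bdd : ∃ M : ℝ, ∀ x : ℝ, ∀ t ∈ Set.Icc 0 T, |u x t| ≤ M)
    {v₀ : ℝ → ℝ} (hv₀ : Measurable v₀) {γ δ : ℝ} (hv₀_mem : ∀ y, v₀ y ∈ Set.Icc γ δ)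
    (hg_nonneg : ∀ ζ ∈ Set.Icc γ δ, 0 ≤ g ζ) (h0 : ∀ y, v₀ y ≤ u y 0)
    (x : ℝ) {t : ℝ} (ht : t ∈ Set.Ioc 0 T) : ∫ y, v₀ y ∂stableTransition κ σ t x ≤ u x t := by
  have hT : 0 ≤ T := ht.1.le.trans ht.2
  obtain ⟨M, hM⟩ := hu_bdd
  let u' : ℝ → ℝ → ℝ := fun y s ↦ u y (Set.projIcc 0 T hT s)
  have hu_eq (y : ℝ) : ∀ s ∈ Set.Icc 0 T, u y s = u' y s := fun s hs ↦ by
    simp only [u', Set.projIcc_of_mem hT hs]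
  have hu'_cont : Continuous (uncurry u') :=
    hu_cont.comp_continuous (f := fun p : ℝ × ℝ ↦ (p.1, (Set.projIcc 0 T hT p.2 : ℝ)))
      (by fun_prop) fun p ↦ ⟨trivial, Subtype.coe_prop _⟩
  rw [hu_eq x t ⟨ht.1.le, ht.2⟩]
  exact ((hu.congr hu_eq).isDuhamelSolution hκ).integral_le
    (isTransitionSemigroup_stableTransition σ hκ.le) hg hu'_cont.measurable
    (fun y s ↦ hM y _ (Subtype.coe_prop _)) hv₀ hv₀_mem hg_nonneg
    (fun y ↦ hu_eq y 0 ⟨le_rfl, hT⟩ ▸ h0 y) x ht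

end MildSolution

theorem mild_solution_step_data_comparison_general {κ σ : ℝ} (hκ : 0 < κ)
    {g : ℝ → ℝ} (hg : LocallyLipschitz g) {T : ℝ} {u : ℝ → ℝ → ℝ}
    (hu_cont : ContinuousOn (fun p : ℝ × ℝ ↦ u p.1 p.2) (Set.univ ×ˢ Set.Icc 0 T))
    (hu_bdd : ∃ M : ℝ, ∀ x : ℝ, ∀ t ∈ Set.Icc 0 T, |u x t| ≤ M)
    (hu : IsMildSolution κ σ g T u)
    {ι : Type*} [Fintype ι] {a₀ : ℝ} {a c : ι → ℝ} {v₀ : ℝ → ℝ}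
    (hv₀ : ∀ x, v₀ x = a₀ + ∑ j, a j * heaviside (x - c j))
    {γ δ : ℝ} (hv₀_mem : ∀ x, v₀ x ∈ Set.Icc γ δ)
    (hg_nonneg : ∀ ζ ∈ Set.Icc γ δ, 0 ≤ g ζ) (h0 : ∀ x, v₀ x ≤ u x 0)
    (x : ℝ) {t : ℝ} (ht : t ∈ Set.Ioc 0 T) :
    a₀ + ∑ j, a j * (1 / 2 + 1 / π * arctan (((x - c j) / t - σ) / κ)) ≤ u x t := by
  obtain rfl : v₀ = fun x ↦ a₀ + ∑ j, a j * heaviside (x - c j) := funext hv₀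
  have hv₀_meas : Measurable fun x ↦ a₀ + ∑ j, a j * heaviside (x - c j) := by
    have := measurable_heaviside
    fun_prop
  rw [← integral_step_stableTransition σ hκ ht.1]
  exact hu.integral_stableTransition_le hκ hg hu_cont hu_bdd hv₀_meas hv₀_mem hg_nonneg h0 x ht

/-- Comparison with step-function initial data. Let `u` be a
bounded continuous mild solution of `∂_t u + Au = g(u)` on `ℝ × [0,T]` whose
initial datum has finite limits at `±∞`. If
`v₀(x) = a₀ + Σ_{j} a_j·H(x − c_j)` with `c₁ < ⋯ < c_N`,
`γ = min v₀ ≤ δ = max v₀`, `g ≥ 0` on `[γ,δ]`, and `u(·,0) ≥ v₀`, then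
`u(x,t) ≥ a₀ + Σ_j a_j·F((x − c_j)/t)` for all `x ∈ ℝ`, `t ∈ (0,T]`,
where `F(x) = 1/2 + (1/π)·arctan((x−σ)/κ)` is the stable CDF. -/
theorem mild_solution_step_data_comparison
    (β : ℝ) (hβ : β ∈ Set.Ioo (-1 : ℝ) 1)
    (κ σ : ℝ) (hκ : κ = Real.cos (π * β / 2)) (hσ : σ = Real.sin (π * β / 2))
    (g : ℝ → ℝ) (hg : LocallyLipschitz g)
    (T : ℝ) (hT : 0 < T)
    (u : ℝ → ℝ → ℝ)
    (hu_cont : ContinuousOn (fun p : ℝ × ℝ => u p.1 p.2)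
      (Set.univ ×ˢ Set.Icc 0 T))
    (hu_bdd : ∃ M : ℝ, ∀ x : ℝ, ∀ t ∈ Set.Icc (0 : ℝ) T, |u x t| ≤ M)
    (hu : IsMildSolution κ σ g T u)
    (hu0_limits : (∃ Lp : ℝ, Tendsto (fun x : ℝ => u x 0) atTop (𝓝 Lp)) ∧
      (∃ Lm : ℝ, Tendsto (fun x : ℝ => u x 0) atBot (𝓝 Lm)))
    (N : ℕ) (hN : 1 ≤ N)
    (a₀ : ℝ) (a : Fin N → ℝ) (c : Fin N → ℝ) (hc : StrictMono c)
    (v₀ : ℝ → ℝ)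
    (hv₀ : ∀ x : ℝ, v₀ x = a₀ + ∑ j : Fin N, a j * heaviside (x - c j))
    (γ δ : ℝ) (hγ : IsLeast (Set.range v₀) γ) (hδ : IsGreatest (Set.range v₀) δ)
    (hg_nonneg : ∀ ζ ∈ Set.Icc γ δ, 0 ≤ g ζ)
    (h0 : ∀ x : ℝ, v₀ x ≤ u x 0) :
    ∀ x t : ℝ, 0 < t → t ≤ T →
      a₀ + ∑ j : Fin N,
          a j * (1 / 2 + (1 / π) * Real.arctan (((x - c j) / t - σ) / κ)) ≤
        u x t := by
  have hκ_pos : 0 < κ :=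
    hκ ▸ cos_pos_of_mem_Ioo ⟨by nlinarith [pi_pos, hβ.1], by nlinarith [pi_pos, hβ.2]⟩
  exact fun x t ht htT ↦ mild_solution_step_data_comparison_general hκ_pos hg hu_cont hu_bdd hu hv₀
    (fun y ↦ ⟨hγ.2 ⟨y, rfl⟩, hδ.2 ⟨y, rfl⟩⟩) hg_nonneg h0 x ⟨ht, htT⟩
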